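/- Measurement compatibility for balanced two-mode displaced squeezed probes: in the two-mode noisy interferometry setting with general input displacement d₀ = √2·(α₁, α₂, β₁, β₂)ᵀ satisfying α₁² + α₂² = β₁² + β₂², for any symmetric matrices L_φ, L_x, L_y with V L_ζ V + Ω L_ζ Ω = ∂_ζ V (ζ ∈ {φ, x, y}), the quantity 𝒥_{ηζ} := 2·tr( Ω L_ζ V L_η ) + 2·(∂_η d)ᵀ V⁻¹ Ω V⁻¹ (∂_ζ d) vanishes for all pairs η, ζ ∈ {φ, x, y}. -/

import Mathlib

open Matrix

noncomputable section

/-- The standard symplectic form on two modes (4×4). -/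
def Omega4 : Matrix (Fin 4) (Fin 4) ℝ :=
  !![0, 1, 0, 0; -1, 0, 0, 0; 0, 0, 0, 1; 0, 0, -1, 0]

/-- Covariance matrix of the two-mode squeezed input with squeezing parameter `r`. -/
def V0 (r : ℝ) : Matrix (Fin 4) (Fin 4) ℝ :=
  !![Real.cosh (2*r), 0, Real.sinh (2*r), 0;
     0, Real.cosh (2*r), 0, -Real.sinh (2*r);
     Real.sinh (2*r), 0, Real.cosh (2*r), 0;
     0, -Real.sinh (2*r), 0, Real.cosh (2*r)]

/-- General input displacement `√2·(α₁, α₂, β₁, β₂)ᵀ`. -/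
def d0g (α₁ α₂ β₁ β₂ : ℝ) : Fin 4 → ℝ :=
  Real.sqrt 2 • ![α₁, α₂, β₁, β₂]

/-- Phase rotations by `±φ/2` on the two modes. -/
def Sphase (φ : ℝ) : Matrix (Fin 4) (Fin 4) ℝ :=
  !![Real.cos (φ/2), Real.sin (φ/2), 0, 0;
     -Real.sin (φ/2), Real.cos (φ/2), 0, 0;
     0, 0, Real.cos (φ/2), -Real.sin (φ/2);
     0, 0, Real.sin (φ/2), Real.cos (φ/2)]

/-- Evolved covariance matrix `x·S_φ V₀ S_φᵀ + y·𝟙₄`. -/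
def Vm (r φ x y : ℝ) : Matrix (Fin 4) (Fin 4) ℝ :=
  x • (Sphase φ * V0 r * (Sphase φ)ᵀ) + y • (1 : Matrix (Fin 4) (Fin 4) ℝ)

/-- Evolved displacement `√x·S_φ d₀`. -/
def dmg (α₁ α₂ β₁ β₂ φ x : ℝ) : Fin 4 → ℝ :=
  Real.sqrt x • (Sphase φ).mulVec (d0g α₁ α₂ β₁ β₂)

/-- Entrywise partial derivative of `Vm` with respect to `φ`. -/
def dVdphi (r φ x y : ℝ) : Matrix (Fin 4) (Fin 4) ℝ :=
  Matrix.of fun i j => deriv (fun t => Vm r t x y i j) φ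

/-- Entrywise partial derivative of `Vm` with respect to `x`. -/
def dVdx (r φ x y : ℝ) : Matrix (Fin 4) (Fin 4) ℝ :=
  Matrix.of fun i j => deriv (fun t => Vm r φ t y i j) x

/-- Entrywise partial derivative of `Vm` with respect to `y`. -/
def dVdy (r φ x y : ℝ) : Matrix (Fin 4) (Fin 4) ℝ :=
  Matrix.of fun i j => deriv (fun t => Vm r φ x t i j) y

/-- Entrywise partial derivative of `dmg` with respect to `φ`. -/
def ddgphi (α₁ α₂ β₁ β₂ φ x : ℝ) : Fin 4 → ℝ :=
  fun i => deriv (fun t => dmg α₁ α₂ β₁ β₂ t x i) φ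

/-- Entrywise partial derivative of `dmg` with respect to `x`. -/
def ddgx (α₁ α₂ β₁ β₂ φ x : ℝ) : Fin 4 → ℝ :=
  fun i => deriv (fun t => dmg α₁ α₂ β₁ β₂ φ t i) x

/-- Entrywise partial derivative of `dmg` with respect to `y` (the displacement does
not depend on `y`). -/
def ddgy (α₁ α₂ β₁ β₂ φ x y : ℝ) : Fin 4 → ℝ :=
  fun i => deriv (fun _t : ℝ => dmg α₁ α₂ β₁ β₂ φ x i) y

/-!
The covariance matrix `V = x V₀ + y` does not depend on `φ` and lies in the algebra generated by
the squeezing coupling `K`, a symmetric involution that anticommutes with `Ω`; hence `V Ω V = δ Ω`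
for a scalar `δ`. Multiplying `V L V + Ω L Ω = ∂V` by `V Ω` on the left and `Ω V` on the right,
and subtracting the original equation, solves for `L`, and the solution again lies in `ℝ[K]`. All
factors of `L_ζ V L_η` are then commuting symmetric matrices, and the antisymmetric `Ω` kills the
trace. In the displacement term `V⁻¹ Ω V⁻¹ = δ⁻¹ Ω`, so antisymmetry leaves only the `(φ, x)`
pair. There `∂_φ d` is half the phase generator applied to `d` and `∂_x d` is proportional to `d`,
so the term is a multiple of the difference of the two mode energies, which the phase rotation
conserves and the balance condition annihilates.
-/

section AnticommutingInvolution

variable {𝕜 R : Type*} [CommRing 𝕜] [Ring R] [Algebra 𝕜 R]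

theorem mul_mul_mem_adjoin_singleton {J K M : R} (hJ : J * J = -1) (hJK : J * K = -(K * J))
    (hM : M ∈ Algebra.adjoin 𝕜 {K}) : J * M * J ∈ Algebra.adjoin 𝕜 {K} := by
  induction hM using Algebra.adjoin_induction with
  | mem M hM =>
    have hJKJ : J * K * J = K := by rw [hJK, neg_mul, mul_assoc, hJ, mul_neg_one, neg_neg]
    rw [Set.mem_singleton_iff.mp hM, hJKJ]
    exact Algebra.self_mem_adjoin_singleton 𝕜 K
  | algebraMap c =>
    rw [← Algebra.commutes, mul_assoc, hJ, mul_neg_one]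
    exact neg_mem (algebraMap_mem _ c)
  | add A B _ _ hA hB =>
    rw [mul_add, add_mul]
    exact add_mem hA hB
  | mul A B _ _ hA hB =>
    have hJABJ : J * (A * B) * J = -(J * A * J * (J * B * J)) := by
      calc J * (A * B) * J = -(J * A * (-1) * B * J) := by noncomm_ring
        _ = -(J * A * J * (J * B * J)) := by rw [← hJ]; noncomm_ring
    exact hJABJ ▸ neg_mem (mul_mem hA hB)

theorem smul_one_add_smul_mul_mul_self {J K : R} (hK : K * K = 1) (hJK : J * K = -(K * J))
    (a b : 𝕜) :
    (a • 1 + b • K) * J * (a • 1 + b • K) = (a ^ 2 - b ^ 2) • J := by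
  have hJ_mul : J * (a • 1 + b • K) = (a • 1 - b • K) * J := by
    rw [mul_add, sub_mul, mul_smul_comm, mul_smul_comm, smul_mul_assoc, smul_mul_assoc, hJK,
      mul_one, one_mul, smul_neg, sub_eq_add_neg]
  have hnorm : (a • 1 + b • K) * (a • 1 - b • K) = (a ^ 2 - b ^ 2) • (1 : R) := by
    simp only [add_mul, mul_sub, smul_mul_smul_comm, one_mul, mul_one, hK]
    module
  rw [mul_assoc, hJ_mul, ← mul_assoc, hnorm, smul_one_mul]

end AnticommutingInvolution

theorem eq_inv_smul_of_mul_mul_add_mul_mul_eq {𝕜 R : Type*} [Field 𝕜] [Ring R] [Algebra 𝕜 R]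
    {J V L M : R} {δ : 𝕜} (hJ : J * J = -1) (hV : V * J * V = δ • J) (hδ : δ ^ 2 ≠ 1)
    (hL : V * L * V + J * L * J = M) :
    L = (δ ^ 2 - 1)⁻¹ • (J * (V * (J * M * J) * V) * J - J * M * J) := by
  have hVJMJV : V * (J * M * J) * V = δ ^ 2 • (J * L * J) + V * L * V := by
    calc V * (J * M * J) * V
        = (V * J * V) * L * (V * J * V) + V * (J * J) * L * (J * J) * V := by
          rw [← hL]; noncomm_ring
      _ = δ ^ 2 • (J * L * J) + V * L * V := by
          rw [hV, hJ]; simp [smul_smul, sq]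
  have hdiff : V * (J * M * J) * V - M = (δ ^ 2 - 1) • (J * L * J) := by
    rw [hVJMJV, ← hL]
    module
  have hJLJ : J * (J * L * J) * J = L := by
    calc J * (J * L * J) * J = (J * J) * L * (J * J) := by noncomm_ring
      _ = L := by simp [hJ]
  rw [← sub_mul, ← mul_sub, hdiff, mul_smul_comm, smul_mul_assoc, hJLJ,
    inv_smul_smul₀ (sub_ne_zero.mpr hδ)]

section Skew

variable {n R : Type*} [Fintype n] [CommRing R] {J : Matrix n n R}

theorem dotProduct_mulVec_eq_neg_of_transpose_eq_neg (hJ : Jᵀ = -J) (v w : n → R) :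
    v ⬝ᵥ J *ᵥ w = -(w ⬝ᵥ J *ᵥ v) := by
  rw [dotProduct_mulVec, ← mulVec_transpose, hJ, neg_mulVec, neg_dotProduct, dotProduct_comm]

theorem dotProduct_mulVec_self_of_transpose_eq_neg [IsAddTorsionFree R] (hJ : Jᵀ = -J)
    (v : n → R) : v ⬝ᵥ J *ᵥ v = 0 :=
  self_eq_neg.mp (dotProduct_mulVec_eq_neg_of_transpose_eq_neg hJ v v)

theorem trace_mul_of_transpose_eq_neg_of_isSymm [IsAddTorsionFree R] {S : Matrix n n R}
    (hJ : Jᵀ = -J) (hS : S.IsSymm) : (J * S).trace = 0 := by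
  refine self_eq_neg.mp ?_
  calc (J * S).trace = (Sᵀ * Jᵀ).trace := by rw [← transpose_mul, trace_transpose]
    _ = -(J * S).trace := by rw [hS.eq, hJ, mul_neg, trace_neg, trace_mul_comm]

end Skew

theorem mulVec_dotProduct_mulVec_of_transpose_mul_self {n R : Type*} [Fintype n] [DecidableEq n]
    [CommSemiring R] {A : Matrix n n R} (hA : Aᵀ * A = 1) (v w : n → R) :
    A *ᵥ v ⬝ᵥ A *ᵥ w = v ⬝ᵥ w := by
  rw [dotProduct_mulVec, ← mulVec_transpose, mulVec_mulVec, hA, one_mulVec]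

section MatrixLemmas

variable {n 𝕜 : Type*} [Fintype n] [DecidableEq n]

theorem isSymm_of_mem_adjoin_singleton [CommSemiring 𝕜] {K A : Matrix n n 𝕜} (hK : K.IsSymm)
    (hA : A ∈ Algebra.adjoin 𝕜 {K}) : A.IsSymm := by
  induction hA using Algebra.adjoin_induction with
  | mem A hA => exact (Set.mem_singleton_iff.mp hA) ▸ hK
  | algebraMap c => exact isSymm_diagonal _
  | add A B _ _ hA hB => exact hA.add hB
  | mul A B hA_mem hB_mem hA hB =>
    rw [IsSymm, transpose_mul, hA.eq, hB.eq]
    exact setLike_mul_comm hB_mem hA_mem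

theorem inv_mul_mul_inv_of_mul_mul_eq_smul [Field 𝕜] {J V : Matrix n n 𝕜} {δ : 𝕜}
    (hJ : J * J = -1) (hV : V * J * V = δ • J) (hδ : δ ≠ 0) :
    V⁻¹ * J * V⁻¹ = δ⁻¹ • J := by
  have hright : V * (-δ⁻¹ • (J * V * J)) = 1 := by
    calc V * (-δ⁻¹ • (J * V * J)) = -δ⁻¹ • (V * J * V * J) := by
          rw [mul_smul_comm]; simp only [mul_assoc]
      _ = 1 := by simp [hV, hJ, hδ]
  have hdet : IsUnit V.det := isUnit_det_of_right_inverse hright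
  calc V⁻¹ * J * V⁻¹ = δ⁻¹ • (V⁻¹ * (δ • J) * V⁻¹) := by simp [smul_smul, hδ]
    _ = δ⁻¹ • ((V⁻¹ * V) * J * (V * V⁻¹)) := by rw [← hV]; simp only [mul_assoc]
    _ = δ⁻¹ • J := by simp [nonsing_inv_mul _ hdet, mul_nonsing_inv _ hdet]

end MatrixLemmas

theorem Omega4_mul_self : Omega4 * Omega4 = -1 := by
  ext i j
  fin_cases i <;> fin_cases j <;> simp [Omega4, mul_apply, Fin.sum_univ_four]

theorem Omega4_transpose : Omega4ᵀ = -Omega4 := by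
  ext i j
  fin_cases i <;> fin_cases j <;> simp [Omega4]

/-- The off-diagonal part `K = [[0, σ_z], [σ_z, 0]]` of the two-mode squeezed covariance matrix. -/
def squeezeCoupling : Matrix (Fin 4) (Fin 4) ℝ :=
  !![0, 0, 1, 0; 0, 0, 0, -1; 1, 0, 0, 0; 0, -1, 0, 0]

theorem squeezeCoupling_isSymm : squeezeCoupling.IsSymm := by
  ext i j
  fin_cases i <;> fin_cases j <;> rfl

theorem squeezeCoupling_mul_self : squeezeCoupling * squeezeCoupling = 1 := by
  ext i j
  fin_cases i <;> fin_cases j <;> simp [squeezeCoupling, mul_apply, Fin.sum_univ_four]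

theorem Omega4_mul_squeezeCoupling : Omega4 * squeezeCoupling = -(squeezeCoupling * Omega4) := by
  ext i j
  fin_cases i <;> fin_cases j <;> simp [Omega4, squeezeCoupling, mul_apply, Fin.sum_univ_four]

theorem V0_eq (r : ℝ) :
    V0 r = Real.cosh (2 * r) • (1 : Matrix (Fin 4) (Fin 4) ℝ)
      + Real.sinh (2 * r) • squeezeCoupling := by
  ext i j
  fin_cases i <;> fin_cases j <;> simp [V0, squeezeCoupling]

/-- The generator `J ⊕ (-J)` of the phase rotation, `S_φ = exp ((φ / 2) · (J ⊕ (-J)))`. -/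
def phaseGenerator : Matrix (Fin 4) (Fin 4) ℝ :=
  !![0, 1, 0, 0; -1, 0, 0, 0; 0, 0, 0, -1; 0, 0, 1, 0]

theorem phaseGenerator_mul_self : phaseGenerator * phaseGenerator = -1 := by
  ext i j
  fin_cases i <;> fin_cases j <;> simp [phaseGenerator, mul_apply, Fin.sum_univ_four]

theorem phaseGenerator_transpose : phaseGeneratorᵀ = -phaseGenerator := by
  ext i j
  fin_cases i <;> fin_cases j <;> simp [phaseGenerator]

theorem commute_phaseGenerator_squeezeCoupling : Commute phaseGenerator squeezeCoupling := by
  ext i j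
  fin_cases i <;> fin_cases j <;>
    simp [phaseGenerator, squeezeCoupling, mul_apply, Fin.sum_univ_four]

theorem commute_phaseGenerator_Omega4 : Commute phaseGenerator Omega4 := by
  ext i j
  fin_cases i <;> fin_cases j <;> simp [phaseGenerator, Omega4, mul_apply, Fin.sum_univ_four]

theorem Sphase_eq (φ : ℝ) :
    Sphase φ = Real.cos (φ / 2) • (1 : Matrix (Fin 4) (Fin 4) ℝ)
      + Real.sin (φ / 2) • phaseGenerator := by
  ext i j
  fin_cases i <;> fin_cases j <;> simp [Sphase, phaseGenerator]

theorem commute_Sphase_of_commute_phaseGenerator {A : Matrix (Fin 4) (Fin 4) ℝ}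
    (hA : Commute phaseGenerator A) (φ : ℝ) : Commute (Sphase φ) A := by
  rw [Sphase_eq]
  exact ((Commute.one_left A).smul_left _).add_left (hA.smul_left _)

theorem Sphase_transpose_mul_self (φ : ℝ) : (Sphase φ)ᵀ * Sphase φ = 1 := by
  rw [Sphase_eq, transpose_add, transpose_smul, transpose_smul, transpose_one,
    phaseGenerator_transpose]
  simp only [add_mul, mul_add, smul_mul_smul_comm, one_mul, mul_one, neg_mul,
    phaseGenerator_mul_self]
  linear_combination (norm := module)
    Real.cos_sq_add_sin_sq (φ / 2) • (1 : Matrix (Fin 4) (Fin 4) ℝ)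

theorem Vm_eq (r φ x y : ℝ) : Vm r φ x y = x • V0 r + y • 1 := by
  have hcomm : Commute (Sphase φ) (V0 r) := by
    rw [V0_eq]
    exact ((Commute.one_right _).smul_right _).add_right
      ((commute_Sphase_of_commute_phaseGenerator
        commute_phaseGenerator_squeezeCoupling φ).smul_right _)
  rw [Vm, hcomm.eq, mul_assoc, mul_eq_one_comm.mp (Sphase_transpose_mul_self φ), mul_one]

theorem dVdphi_eq (r φ x y : ℝ) : dVdphi r φ x y = 0 := by
  ext i j
  simp [dVdphi, Vm_eq]

theorem dVdx_eq (r φ x y : ℝ) : dVdx r φ x y = V0 r := by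
  ext i j
  simp [dVdx, Vm_eq]

theorem dVdy_eq (r φ x y : ℝ) : dVdy r φ x y = 1 := by
  ext i j
  simp [dVdy, Vm_eq]

/-- The scalar `δ` with `V Ω V = δ Ω`, that is, the square of the doubly degenerate symplectic
eigenvalue of `Vm r φ x y`. The state is pure exactly when `δ = 1`. -/
def symplecticEigenvalueSq (r x y : ℝ) : ℝ :=
  x ^ 2 + 2 * x * y * Real.cosh (2 * r) + y ^ 2

theorem one_lt_symplecticEigenvalueSq (r : ℝ) {x y : ℝ} (hx : 0 < x) (hy : |1 - x| < y) :
    1 < symplecticEigenvalueSq r x y := by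
  have hy_pos : 0 < y := (abs_nonneg _).trans_lt hy
  have hxy : 1 < x + y := by linarith [le_abs_self (1 - x)]
  calc 1 < (x + y) ^ 2 := one_lt_pow₀ hxy two_ne_zero
    _ = x ^ 2 + 2 * x * y * 1 + y ^ 2 := by ring
    _ ≤ symplecticEigenvalueSq r x y := by
      rw [symplecticEigenvalueSq]
      gcongr
      exact Real.one_le_cosh _

theorem Vm_mul_Omega4_mul_Vm (r φ x y : ℝ) :
    Vm r φ x y * Omega4 * Vm r φ x y = symplecticEigenvalueSq r x y • Omega4 := by
  have hVm : Vm r φ x y = (x * Real.cosh (2 * r) + y) • (1 : Matrix (Fin 4) (Fin 4) ℝ)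
      + (x * Real.sinh (2 * r)) • squeezeCoupling := by
    rw [Vm_eq, V0_eq]
    module
  have hδ : (x * Real.cosh (2 * r) + y) ^ 2 - (x * Real.sinh (2 * r)) ^ 2
      = symplecticEigenvalueSq r x y := by
    rw [symplecticEigenvalueSq]
    linear_combination x ^ 2 * Real.cosh_sq (2 * r)
  rw [hVm, smul_one_add_smul_mul_mul_self squeezeCoupling_mul_self Omega4_mul_squeezeCoupling, hδ]

/-- The commutative algebra `ℝ[K]` of symmetric matrices that contains the covariance matrices,
their derivatives and the solutions `L_ζ`. -/
def squeezeAlgebra : Subalgebra ℝ (Matrix (Fin 4) (Fin 4) ℝ) :=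
  Algebra.adjoin ℝ {squeezeCoupling}

theorem V0_mem_squeezeAlgebra (r : ℝ) : V0 r ∈ squeezeAlgebra := by
  rw [V0_eq]
  exact add_mem (Subalgebra.smul_mem _ (one_mem _) _)
    (Subalgebra.smul_mem _ (Algebra.self_mem_adjoin_singleton ℝ _) _)

theorem Vm_mem_squeezeAlgebra (r φ x y : ℝ) : Vm r φ x y ∈ squeezeAlgebra := by
  rw [Vm_eq]
  exact add_mem (Subalgebra.smul_mem _ (V0_mem_squeezeAlgebra r) _)
    (Subalgebra.smul_mem _ (one_mem _) _)

theorem mem_squeezeAlgebra_of_Vm_mul_mul_add_eq {r φ x y : ℝ} {L M : Matrix (Fin 4) (Fin 4) ℝ}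
    (hδ : symplecticEigenvalueSq r x y ^ 2 ≠ 1) (hM : M ∈ squeezeAlgebra)
    (hL : Vm r φ x y * L * Vm r φ x y + Omega4 * L * Omega4 = M) : L ∈ squeezeAlgebra := by
  have hOmega {A : Matrix (Fin 4) (Fin 4) ℝ} (hA : A ∈ squeezeAlgebra) :
      Omega4 * A * Omega4 ∈ squeezeAlgebra :=
    mul_mul_mem_adjoin_singleton Omega4_mul_self Omega4_mul_squeezeCoupling hA
  have hV := Vm_mem_squeezeAlgebra r φ x y
  rw [eq_inv_smul_of_mul_mul_add_mul_mul_eq Omega4_mul_self (Vm_mul_Omega4_mul_Vm r φ x y) hδ hL]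
  exact Subalgebra.smul_mem _
    (sub_mem (hOmega (mul_mem (mul_mem hV (hOmega hM)) hV)) (hOmega hM)) _

theorem trace_Omega4_mul_of_mem_squeezeAlgebra {A : Matrix (Fin 4) (Fin 4) ℝ}
    (hA : A ∈ squeezeAlgebra) : (Omega4 * A).trace = 0 :=
  trace_mul_of_transpose_eq_neg_of_isSymm Omega4_transpose
    (isSymm_of_mem_adjoin_singleton squeezeCoupling_isSymm hA)

section Displacement

variable (α₁ α₂ β₁ β₂ φ x : ℝ)

theorem ddgphi_eq :
    ddgphi α₁ α₂ β₁ β₂ φ x = (1 / 2 : ℝ) • phaseGenerator *ᵥ dmg α₁ α₂ β₁ β₂ φ x := by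
  set d := d0g α₁ α₂ β₁ β₂
  have hdmg (t : ℝ) : dmg α₁ α₂ β₁ β₂ t x
      = √x • (Real.cos (t / 2) • d + Real.sin (t / 2) • phaseGenerator *ᵥ d) := by
    rw [dmg, Sphase_eq, add_mulVec, smul_mulVec, smul_mulVec, one_mulVec]
  have hhalf : HasDerivAt (fun t : ℝ => t / 2) (1 / 2) φ := (hasDerivAt_id φ).div_const 2
  have hderiv : HasDerivAt (fun t => dmg α₁ α₂ β₁ β₂ t x)
      (√x • ((-Real.sin (φ / 2) * (1 / 2)) • d
        + (Real.cos (φ / 2) * (1 / 2)) • phaseGenerator *ᵥ d)) φ := by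
    simp only [hdmg]
    exact ((hhalf.cos.smul_const d).add (hhalf.sin.smul_const _)).const_smul √x
  have hG (v : Fin 4 → ℝ) : phaseGenerator *ᵥ phaseGenerator *ᵥ v = -v := by
    rw [mulVec_mulVec, phaseGenerator_mul_self, neg_mulVec, one_mulVec]
  calc ddgphi α₁ α₂ β₁ β₂ φ x = _ := funext fun i => (hasDerivAt_pi.mp hderiv i).deriv
    _ = (1 / 2 : ℝ) • phaseGenerator *ᵥ dmg α₁ α₂ β₁ β₂ φ x := by
      rw [hdmg, mulVec_smul, mulVec_add, mulVec_smul, mulVec_smul, hG]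
      module

variable {x} in
theorem ddgx_eq (hx : 0 < x) :
    ddgx α₁ α₂ β₁ β₂ φ x = (2 * x)⁻¹ • dmg α₁ α₂ β₁ β₂ φ x := by
  have hscale : 1 / (2 * √x) = (2 * x)⁻¹ * √x := by
    rw [mul_inv, mul_assoc, inv_mul_eq_div x, Real.sqrt_div_self, one_div, mul_inv]
  ext i
  calc ddgx α₁ α₂ β₁ β₂ φ x i = 1 / (2 * √x) * (Sphase φ *ᵥ d0g α₁ α₂ β₁ β₂) i :=
        ((Real.hasDerivAt_sqrt hx.ne').mul_const _).deriv
    _ = ((2 * x)⁻¹ • dmg α₁ α₂ β₁ β₂ φ x) i := by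
      rw [hscale, dmg, Pi.smul_apply, Pi.smul_apply, smul_eq_mul, smul_eq_mul, mul_assoc]

theorem ddgy_eq (y : ℝ) : ddgy α₁ α₂ β₁ β₂ φ x y = 0 := by
  ext i
  simp [ddgy]

theorem phaseGenerator_mulVec_d0g_dotProduct :
    phaseGenerator *ᵥ d0g α₁ α₂ β₁ β₂ ⬝ᵥ Omega4 *ᵥ d0g α₁ α₂ β₁ β₂
      = 2 * ((α₁ ^ 2 + α₂ ^ 2) - (β₁ ^ 2 + β₂ ^ 2)) := by
  have hsqrt : √(2 : ℝ) * √2 = 2 := Real.mul_self_sqrt zero_le_two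
  rw [d0g, mulVec_smul, mulVec_smul, smul_dotProduct, dotProduct_smul, smul_smul, hsqrt,
    smul_eq_mul]
  congr 1
  simp only [phaseGenerator, Omega4, mulVec, dotProduct, Fin.sum_univ_four, of_apply, cons_val',
    cons_val_fin_one, cons_val_zero, cons_val_one, cons_val]
  ring

variable {α₁ α₂ β₁ β₂ x}

theorem ddgphi_dotProduct_Omega4_mulVec_ddgx (hx : 0 < x)
    (hbal : α₁ ^ 2 + α₂ ^ 2 = β₁ ^ 2 + β₂ ^ 2) :
    ddgphi α₁ α₂ β₁ β₂ φ x ⬝ᵥ Omega4 *ᵥ ddgx α₁ α₂ β₁ β₂ φ x = 0 := by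
  have hG := commute_Sphase_of_commute_phaseGenerator (Commute.refl phaseGenerator) φ
  have hOmega := commute_Sphase_of_commute_phaseGenerator commute_phaseGenerator_Omega4 φ
  have hconserved : phaseGenerator *ᵥ Sphase φ *ᵥ d0g α₁ α₂ β₁ β₂ ⬝ᵥ
      Omega4 *ᵥ Sphase φ *ᵥ d0g α₁ α₂ β₁ β₂ = 0 := by
    rw [mulVec_mulVec, mulVec_mulVec, ← hG.eq, ← hOmega.eq, ← mulVec_mulVec, ← mulVec_mulVec,
      mulVec_dotProduct_mulVec_of_transpose_mul_self (Sphase_transpose_mul_self φ),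
      phaseGenerator_mulVec_d0g_dotProduct, hbal, sub_self, mul_zero]
  rw [ddgphi_eq, ddgx_eq _ _ _ _ _ hx, dmg]
  simp only [mulVec_smul, smul_dotProduct, dotProduct_smul, hconserved, smul_zero]

theorem ddg_dotProduct_Omega4_mulVec_ddg (y : ℝ) (hx : 0 < x)
    (hbal : α₁ ^ 2 + α₂ ^ 2 = β₁ ^ 2 + β₂ ^ 2) (η ζ : Fin 3) :
    ![ddgphi α₁ α₂ β₁ β₂ φ x, ddgx α₁ α₂ β₁ β₂ φ x, ddgy α₁ α₂ β₁ β₂ φ x y] η ⬝ᵥ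
      Omega4 *ᵥ ![ddgphi α₁ α₂ β₁ β₂ φ x, ddgx α₁ α₂ β₁ β₂ φ x,
        ddgy α₁ α₂ β₁ β₂ φ x y] ζ = 0 := by
  have hφx := ddgphi_dotProduct_Omega4_mulVec_ddgx φ hx hbal
  have hxφ := dotProduct_mulVec_eq_neg_of_transpose_eq_neg Omega4_transpose
    (ddgx α₁ α₂ β₁ β₂ φ x) (ddgphi α₁ α₂ β₁ β₂ φ x)
  rw [hφx, neg_zero] at hxφ
  have hself := dotProduct_mulVec_self_of_transpose_eq_neg Omega4_transpose
  fin_cases η <;> fin_cases ζ <;> simp [hφx, hxφ, hself, ddgy_eq]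

end Displacement

theorem measurement_compatibility_balanced_general (r φ x y α₁ α₂ β₁ β₂ : ℝ)
    (hx : 0 < x) (hδ₀ : symplecticEigenvalueSq r x y ≠ 0)
    (hδ₁ : symplecticEigenvalueSq r x y ^ 2 ≠ 1)
    (hbal : α₁ ^ 2 + α₂ ^ 2 = β₁ ^ 2 + β₂ ^ 2)
    (Lφ Lx Ly : Matrix (Fin 4) (Fin 4) ℝ)
    (hLφ : Vm r φ x y * Lφ * Vm r φ x y + Omega4 * Lφ * Omega4 = dVdphi r φ x y)
    (hLx : Vm r φ x y * Lx * Vm r φ x y + Omega4 * Lx * Omega4 = dVdx r φ x y)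
    (hLy : Vm r φ x y * Ly * Vm r φ x y + Omega4 * Ly * Omega4 = dVdy r φ x y) :
    ∀ η ζ : Fin 3,
      2 * (Omega4 * ![Lφ, Lx, Ly] ζ * Vm r φ x y * ![Lφ, Lx, Ly] η).trace
        + 2 * (![ddgphi α₁ α₂ β₁ β₂ φ x, ddgx α₁ α₂ β₁ β₂ φ x,
                  ddgy α₁ α₂ β₁ β₂ φ x y] η ⬝ᵥ
            ((Vm r φ x y)⁻¹ * Omega4 * (Vm r φ x y)⁻¹).mulVec
              (![ddgphi α₁ α₂ β₁ β₂ φ x, ddgx α₁ α₂ β₁ β₂ φ x,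
                  ddgy α₁ α₂ β₁ β₂ φ x y] ζ)) = 0 := by
  rw [dVdphi_eq] at hLφ
  rw [dVdx_eq] at hLx
  rw [dVdy_eq] at hLy
  have hL (ζ : Fin 3) : ![Lφ, Lx, Ly] ζ ∈ squeezeAlgebra := by
    fin_cases ζ
    · exact mem_squeezeAlgebra_of_Vm_mul_mul_add_eq hδ₁ (zero_mem _) hLφ
    · exact mem_squeezeAlgebra_of_Vm_mul_mul_add_eq hδ₁ (V0_mem_squeezeAlgebra r) hLx
    · exact mem_squeezeAlgebra_of_Vm_mul_mul_add_eq hδ₁ (one_mem _) hLy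
  intro η ζ
  have htrace : (Omega4 * ![Lφ, Lx, Ly] ζ * Vm r φ x y * ![Lφ, Lx, Ly] η).trace = 0 := by
    rw [mul_assoc, mul_assoc]
    exact trace_Omega4_mul_of_mem_squeezeAlgebra
      (mul_mem (hL ζ) (mul_mem (Vm_mem_squeezeAlgebra r φ x y) (hL η)))
  rw [htrace, inv_mul_mul_inv_of_mul_mul_eq_smul Omega4_mul_self (Vm_mul_Omega4_mul_Vm r φ x y) hδ₀,
    smul_mulVec, dotProduct_smul, ddg_dotProduct_Omega4_mulVec_ddg φ y hx hbal η ζ, smul_zero,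
    mul_zero, add_zero]

theorem measurement_compatibility_balanced (r φ x y α₁ α₂ β₁ β₂ : ℝ)
    (hr : 0 ≤ r) (hx : 0 < x) (hy : |1 - x| < y)
    (hbal : α₁^2 + α₂^2 = β₁^2 + β₂^2)
    (Lφ Lx Ly : Matrix (Fin 4) (Fin 4) ℝ)
    (hLφs : Lφ.IsSymm) (hLxs : Lx.IsSymm) (hLys : Ly.IsSymm)
    (hLφ : Vm r φ x y * Lφ * Vm r φ x y + Omega4 * Lφ * Omega4 = dVdphi r φ x y)
    (hLx : Vm r φ x y * Lx * Vm r φ x y + Omega4 * Lx * Omega4 = dVdx r φ x y)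
    (hLy : Vm r φ x y * Ly * Vm r φ x y + Omega4 * Ly * Omega4 = dVdy r φ x y) :
    ∀ η ζ : Fin 3,
      2 * (Omega4 * ![Lφ, Lx, Ly] ζ * Vm r φ x y * ![Lφ, Lx, Ly] η).trace
        + 2 * (![ddgphi α₁ α₂ β₁ β₂ φ x, ddgx α₁ α₂ β₁ β₂ φ x,
                  ddgy α₁ α₂ β₁ β₂ φ x y] η ⬝ᵥ
            ((Vm r φ x y)⁻¹ * Omega4 * (Vm r φ x y)⁻¹).mulVec
              (![ddgphi α₁ α₂ β₁ β₂ φ x, ddgx α₁ α₂ β₁ β₂ φ x,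
                  ddgy α₁ α₂ β₁ β₂ φ x y] ζ)) = 0 := by
  have hδ := one_lt_symplecticEigenvalueSq r hx hy
  exact measurement_compatibility_balanced_general r φ x y α₁ α₂ β₁ β₂ hx (zero_lt_one.trans hδ).ne'
    (one_lt_pow₀ hδ two_ne_zero).ne' hbal Lφ Lx Ly hLφ hLx hLy
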